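/- arXiv:0708.0400 — 3 statements merged into one kernel-verified Lean document; each statement's English description precedes it below -/
import Mathlib

section
/- Given a density ρ, Khudaverdian's operator Δ_E = Δ_1 + ν^{(1)}/8 - ν^{(2)}/24 equals the operator Δ = Δ_ρ + ν_ρ conjugated with the square root of ρ: Δ_E = √ρ ∘ Δ ∘ (1/√ρ). In particular, the conjugated operator √ρ Δ (1/√ρ) does not depend on ρ at all. -/
/-!
Since `√ρ` is invertible, it suffices to compare both sides on `f = √ρ g`, which reduces the claim
to `Δ_E (√ρ g) = √ρ (Δ_ρ + ν_ρ) g`. This form differentiates `√ρ` only, never `1/√ρ`, so the graded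
Leibniz rule applies without knowing that `1/√ρ` is homogeneous.

By the Leibniz rule, `Δ_1 (√ρ g)` is `(Δ_1 √ρ) g + √ρ Δ_1 g` plus two cross terms,
`(-1)^{ε_A} (∂_A √ρ) E^{AB} (∂_B g) / 2` and `(-1)^{ε_A} E^{AB} (∂_B √ρ) (∂_A g) / 2`
(`lap_zero_mul`). They are equal by the graded skewsymmetry of `E` (`cross_eq`). On the other side,
`ρ⁻¹ ∂_A ρ = 2 √ρ⁻¹ ∂_A √ρ` gives `√ρ Δ_ρ g = √ρ Δ_1 g + (-1)^{ε_A} (∂_A √ρ) E^{AB} (∂_B g)`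
(`sq_mul_lapRho`), and `√ρ ν_ρ^{(0)} g = (Δ_1 √ρ) g`. The terms `ν^{(1)}` and `ν^{(2)}` match
because the even function `√ρ` commutes with all sums of homogeneous functions.
-/

open scoped BigOperators

noncomputable section

/-- The sign `(-1)^p` for a parity `p : ZMod 2`, valued in `ℚ`. -/
def sgn (p : ZMod 2) : ℚ := if p = 0 then 1 else -1

/-- A supercommutative algebra of "functions on a superdomain" with local coordinates
`coord i`, Grassmann parities `ε i`, and left partial derivatives `D i`. -/
structure SuperAlg (ι : Type) [Fintype ι] [DecidableEq ι]
    (A : Type) [Ring A] [Algebra ℚ A] where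
  ε : ι → ZMod 2
  hom : ZMod 2 → Submodule ℚ A
  one_mem : (1 : A) ∈ hom 0
  mul_mem : ∀ {p q : ZMod 2} {a b : A}, a ∈ hom p → b ∈ hom q → a * b ∈ hom (p + q)
  supercomm : ∀ {p q : ZMod 2} {a b : A}, a ∈ hom p → b ∈ hom q →
    a * b = sgn (p * q) • (b * a)
  D : ι → A →ₗ[ℚ] A
  D_mem : ∀ (i : ι) {p : ZMod 2} {a : A}, a ∈ hom p → D i a ∈ hom (p + ε i)
  D_leibniz : ∀ (i : ι) {p : ZMod 2} {a : A} (b : A), a ∈ hom p →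
    D i (a * b) = D i a * b + sgn (ε i * p) • (a * D i b)
  D_comm : ∀ (i j : ι) (a : A), D i (D j a) = sgn (ε i * ε j) • D j (D i a)
  coord : ι → A
  coord_mem : ∀ i, coord i ∈ hom (ε i)
  D_coord : ∀ i j, D i (coord j) = if i = j then (1 : A) else 0

namespace SuperAlg

variable {ι : Type} [Fintype ι] [DecidableEq ι]
variable {A : Type} [Ring A] [Algebra ℚ A]

/-- The operator of left multiplication by `f`. -/
def L (f : A) : A →ₗ[ℚ] A := LinearMap.mulLeft ℚ f

/-- The graded commutator `[T,U] = T∘U - (-1)^{pq} U∘T` of operators of parities `p`, `q`. -/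
def gcomm (p q : ZMod 2) (T U : A →ₗ[ℚ] A) : A →ₗ[ℚ] A :=
  T ∘ₗ U - sgn (p * q) • (U ∘ₗ T)

variable (S : SuperAlg ι A)

/-- The bracket `(f,g) = (f ∂⃖_A) M^{AB} (∂_B g)` built from the matrix `M`,
for `f` homogeneous of parity `pf`; the right derivative is expressed through
the left one via `f ∂⃖_A = (-1)^{ε_A (ε_f + 1)} ∂_A f`. -/
def brkt (M : ι → ι → A) (pf : ZMod 2) (f g : A) : A :=
  ∑ a, ∑ b, sgn (S.ε a * (pf + 1)) • (S.D a f * (M a b * S.D b g))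

/-- The first-order operator `(x, ·)` (for Grassmann-odd `x`), built from the matrix `M`. -/
def Hop (M : ι → ι → A) (x : A) : A →ₗ[ℚ] A :=
  ∑ a, ∑ b, L (S.D a x) ∘ₗ L (M a b) ∘ₗ S.D b

/-- The Laplacian `((-1)^{ε_A}/2)(∂_A + F_A) M^{AB} ∂_B`. -/
def lap (F : ι → A) (M : ι → ι → A) : A →ₗ[ℚ] A :=
  (1/2 : ℚ) • ∑ a, ∑ b, sgn (S.ε a) •
    ((S.D a ∘ₗ L (M a b) ∘ₗ S.D b) + (L (F a) ∘ₗ L (M a b) ∘ₗ S.D b))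

/-- The curvature `R_{AB} = (∂_A F_B) - (-1)^{ε_A ε_B}(∂_B F_A)` of a line bundle
connection `F`. -/
def curv (F : ι → A) (a b : ι) : A :=
  S.D a (F b) - sgn (S.ε a * S.ε b) • S.D b (F a)

/-- The raised-index curvature `R^{AD} = E^{AB} R_{BC} E^{CD} (-1)^{ε_C}`. -/
def curvUp (E : ι → ι → A) (F : ι → A) (a d : ι) : A :=
  ∑ b, ∑ c, sgn (S.ε c) • (E a b * (S.curv F b c * E c d))

/-- The graded Jacobi identity for the antibracket, on homogeneous functions. -/
def JacobiId (E : ι → ι → A) : Prop :=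
  ∀ (pf pg ph : ZMod 2) (f g h : A),
    f ∈ S.hom pf → g ∈ S.hom pg → h ∈ S.hom ph →
      sgn ((pf + 1) * (ph + 1)) • S.brkt E pf f (S.brkt E pg g h)
      + sgn ((pg + 1) * (pf + 1)) • S.brkt E pg g (S.brkt E ph h f)
      + sgn ((ph + 1) * (pg + 1)) • S.brkt E ph h (S.brkt E pf f g) = 0

/-- The closedness relation `Σ_{cycl. A,B,C} (-1)^{ε_A ε_C} (∂_A E_{BC}) = 0`
for the two-form with components `Einv`. -/
def ClosedId (Einv : ι → ι → A) : Prop :=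
  ∀ a b c : ι,
    sgn (S.ε a * S.ε c) • S.D a (Einv b c)
    + sgn (S.ε b * S.ε a) • S.D b (Einv c a)
    + sgn (S.ε c * S.ε b) • S.D c (Einv a b) = 0

/-- The Jacobi identity `Σ_{cycl. A,B,C} (-1)^{(ε_A+1)(ε_C+1)} E^{AD} (∂_D E^{BC}) = 0`
in terms of the matrix `E^{AB}`. -/
def EJacobiId (E : ι → ι → A) : Prop :=
  ∀ a b c : ι,
    ∑ d, (sgn ((S.ε a + 1) * (S.ε c + 1)) • (E a d * S.D d (E b c))
      + sgn ((S.ε b + 1) * (S.ε a + 1)) • (E b d * S.D d (E c a))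
      + sgn ((S.ε c + 1) * (S.ε b + 1)) • (E c d * S.D d (E a b))) = 0

/-- `E` is a non-degenerate graded-skewsymmetric (2,0)-tensor with inverse `Einv`. -/
structure AntiSymp (E Einv : ι → ι → A) : Prop where
  E_mem : ∀ a b, E a b ∈ S.hom (S.ε a + S.ε b + 1)
  E_skew : ∀ a b, E a b = - sgn ((S.ε a + 1) * (S.ε b + 1)) • E b a
  Einv_mem : ∀ a b, Einv a b ∈ S.hom (S.ε a + S.ε b + 1)
  Einv_skew : ∀ a b, Einv a b = - sgn (S.ε a * S.ε b) • Einv b a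
  mul_inv : ∀ a c, ∑ b, E a b * Einv b c = if a = c then (1 : A) else 0
  inv_mul : ∀ a c, ∑ b, Einv a b * E b c = if a = c then (1 : A) else 0

/-- An operator `T` of parity `pT` is of at most first order iff all its double graded
commutators with left multiplication operators vanish. -/
def IsFirstOrder (pT : ZMod 2) (T : A →ₗ[ℚ] A) : Prop :=
  ∀ (pf pg : ZMod 2) (f g : A), f ∈ S.hom pf → g ∈ S.hom pg →
    gcomm (pT + pf) pg (gcomm pT pf T (L f)) (L g) = 0

/-- The third-order terms of an operator `T` of parity `pT` vanish iff all its triple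
graded commutators with left multiplication operators vanish. -/
def ThirdOrderVanish (pT : ZMod 2) (T : A →ₗ[ℚ] A) : Prop :=
  ∀ (pf pg ph : ZMod 2) (f g h : A),
    f ∈ S.hom pf → g ∈ S.hom pg → h ∈ S.hom ph →
      gcomm (pT + pf + pg) ph
        (gcomm (pT + pf) pg (gcomm pT pf T (L f)) (L g)) (L h) = 0

/-- `ν_F^{(0)} = ((-1)^{ε_A}/4)(∂_A + F_A/2)(E^{AB} F_B)`. -/
def nuF0 (E : ι → ι → A) (F : ι → A) : A :=
  (1/4 : ℚ) • ∑ a, ∑ b, sgn (S.ε a) •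
    (S.D a (E a b * F b) + (1/2 : ℚ) • (F a * (E a b * F b)))

/-- `ν^{(1)} = (-1)^{ε_A} (∂_B ∂_A E^{AB})`. -/
def nu1 (E : ι → ι → A) : A :=
  ∑ a, ∑ b, sgn (S.ε a) • S.D b (S.D a (E a b))

/-- `ν^{(2)} = (-1)^{ε_A ε_C} (∂_D E^{AB}) E_{BC} (∂_A E^{CD})`. -/
def nu2 (E Einv : ι → ι → A) : A :=
  ∑ a, ∑ b, ∑ c, ∑ d, sgn (S.ε a * S.ε c) •
    (S.D d (E a b) * (Einv b c * S.D a (E c d)))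

/-- `ν_F = ν_F^{(0)} + ν^{(1)}/8 - ν^{(2)}/24`. -/
def nuF (E Einv : ι → ι → A) (F : ι → A) : A :=
  S.nuF0 E F + (1/8 : ℚ) • S.nu1 E - (1/24 : ℚ) • S.nu2 E Einv

/-- The divergence `div_1 X = (-1)^{ε_A} (∂_A X^A)`. -/
def div1 (X : ι → A) : A := ∑ a, sgn (S.ε a) • S.D a (X a)

/-- A form variation (infinitesimal coordinate transformation `δΓ^A = X^A`, compared
at the same argument): an even derivation commuting with the partial derivatives. -/
structure FormVar (X : ι → A) (δv : A →ₗ[ℚ] A) : Prop where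
  deriv : ∀ a b : A, δv (a * b) = δv a * b + a * δv b
  commD : ∀ (i : ι) (a : A), δv (S.D i a) = S.D i (δv a)
  X_mem : ∀ i, X i ∈ S.hom (S.ε i)

/-- The form variation of a (2,0)-tensor `E^{AB}` under `δΓ^A = X^A`:
`δE^{AB} = (X^A ∂⃖_C) E^{CB} + E^{AC}(∂_C X^B) - X^C (∂_C E^{AB})`. -/
def VarE (X : ι → A) (δv : A →ₗ[ℚ] A) (E : ι → ι → A) : Prop :=
  ∀ a b, δv (E a b) =
    (∑ c, sgn (S.ε c * (S.ε a + 1)) • (S.D c (X a) * E c b))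
    + (∑ c, E a c * S.D c (X b))
    - ∑ c, X c * S.D c (E a b)

/-- The form variation of a line bundle connection `F_A` under `δΓ^A = X^A`:
`δF_A = -(∂_A X^B) F_B - ∂_A(div_1 X) - X^C (∂_C F_A)`. -/
def VarF (X : ι → A) (δv : A →ₗ[ℚ] A) (F : ι → A) : Prop :=
  ∀ a, δv (F a) =
    - (∑ b, S.D a (X b) * F b) - S.D a (S.div1 X) - ∑ c, X c * S.D c (F a)

/-- Khudaverdian–Voronov's odd quantity
`ν(F¹;F²,E) = ((-1)^{ε_A}/4)(∂_A + (F¹_A+F²_A)/2)(E^{AB}(F¹_B - F²_B))`. -/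
def nu12 (E : ι → ι → A) (F1 F2 : ι → A) : A :=
  (1/4 : ℚ) • ∑ a, ∑ b, sgn (S.ε a) •
    (S.D a (E a b * (F1 b - F2 b))
      + (1/2 : ℚ) • ((F1 a + F2 a) * (E a b * (F1 b - F2 b))))

/-- The odd Laplacian `Δ_ρ = ((-1)^{ε_A}/(2ρ)) ∂_A ρ E^{AB} ∂_B` for a density `ρ`
with inverse `ρinv`. -/
def lapRho (E : ι → ι → A) (ρ ρinv : A) : A →ₗ[ℚ] A :=
  (1/2 : ℚ) • ∑ a, ∑ b, sgn (S.ε a) •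
    (L ρinv ∘ₗ S.D a ∘ₗ L ρ ∘ₗ L (E a b) ∘ₗ S.D b)

/-- `ν_ρ^{(0)} = (Δ_1 √ρ)/√ρ`, where `sq = √ρ` and `sqinv = 1/√ρ`. -/
def nuRho0 (E : ι → ι → A) (sq sqinv : A) : A :=
  sqinv * (S.lap (fun _ => (0 : A)) E sq)

/-- `ν_ρ = ν_ρ^{(0)} + ν^{(1)}/8 - ν^{(2)}/24`. -/
def nuRho (E Einv : ι → ι → A) (sq sqinv : A) : A :=
  S.nuRho0 E sq sqinv + (1/8 : ℚ) • S.nu1 E - (1/24 : ℚ) • S.nu2 E Einv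

/-- Khudaverdian's operator `Δ_E = Δ_1 + ν^{(1)}/8 - ν^{(2)}/24`. -/
def lapE (E Einv : ι → ι → A) : A →ₗ[ℚ] A :=
  S.lap (fun _ => (0 : A)) E + L ((1/8 : ℚ) • S.nu1 E - (1/24 : ℚ) • S.nu2 E Einv)

/-- The reordered Christoffel symbols `Γ^A{}_{BC} = (-1)^{ε_A ε_B} Γ_B{}^A{}_C`. -/
def Gup (Gm : ι → ι → ι → A) (a b c : ι) : A := sgn (S.ε a * S.ε b) • Gm b a c

/-- The reordered Riemann curvature tensor
`R^A{}_{BCD} = (-1)^{ε_A ε_B}(∂_B Γ^A{}_{CD}) + Γ^A{}_{BE} Γ^E{}_{CD} - (-1)^{ε_B ε_C}(B ↔ C)`,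
expressed through the reordered Christoffel symbols `Gu = Γ^·{}_{··}`. -/
def riemRe (Gu : ι → ι → ι → A) (a b c d : ι) : A :=
  sgn (S.ε a * S.ε b) • S.D b (Gu a c d) + (∑ e, Gu a b e * Gu e c d)
  - sgn (S.ε b * S.ε c) •
      (sgn (S.ε a * S.ε c) • S.D c (Gu a b d) + ∑ e, Gu a c e * Gu e b d)

/-- The Ricci tensor `R_{AB} = R^C{}_{CAB}`. -/
def ricci (Gu : ι → ι → ι → A) (a b : ι) : A := ∑ c, S.riemRe Gu c c a b

/-- The odd scalar curvature `R = R_{AB} E^{BA}`. -/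
def scalarR (Gu : ι → ι → ι → A) (E : ι → ι → A) : A :=
  ∑ a, ∑ b, S.ricci Gu a b * E b a

/-- The Riemann curvature tensor
`R_{AB}{}^C{}_D = (∂_A Γ_B{}^C{}_D) + (-1)^{ε_B ε_C} Γ_A{}^C{}_E Γ^E{}_{BD} - (-1)^{ε_A ε_B}(A ↔ B)`,
built from the Christoffel symbols `Gm = Γ_·{}^·{}_·`. -/
def riem (Gm : ι → ι → ι → A) (a b c d : ι) : A :=
  S.D a (Gm b c d) + sgn (S.ε b * S.ε c) • (∑ e, Gm a c e * S.Gup Gm e b d)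
  - sgn (S.ε a * S.ε b) •
      (S.D b (Gm a c d) + sgn (S.ε a * S.ε c) • ∑ e, Gm b c e * S.Gup Gm e a d)

/-- The Christoffel symbols with three lower indices,
`Γ_{ABC} = E_{AD} Γ^D{}_{BC} (-1)^{ε_B}`, built from `Gu = Γ^·{}_{··}`. -/
def Glow (Einv : ι → ι → A) (Gu : ι → ι → ι → A) (a b c : ι) : A :=
  sgn (S.ε b) • ∑ d, Einv a d * Gu d b c

/-- `γ_{ABC} = Γ_{ABC} - (1/3)(E_{AB} ∂⃖_C + E_{AC} ∂⃖_B (-1)^{ε_B ε_C})`. -/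
def gam (Einv : ι → ι → A) (Gu : ι → ι → ι → A) (a b c : ι) : A :=
  S.Glow Einv Gu a b c
  - (1/3 : ℚ) • (sgn (S.ε c * (S.ε a + S.ε b)) • S.D c (Einv a b)
      + sgn (S.ε b * S.ε c) • (sgn (S.ε b * (S.ε a + S.ε c)) • S.D b (Einv a c)))

end SuperAlg

namespace SuperAlg

theorem sgn_mul_sgn (p q : ZMod 2) : sgn p * sgn q = sgn (p + q) := by
  fin_cases p <;> fin_cases q <;> simp [sgn] <;> decide

theorem neg_sgn (p : ZMod 2) : -sgn p = sgn (p + 1) := by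
  have h : p = 0 ∨ p = 1 := by revert p; decide
  have h2 : (1 + 1 : ZMod 2) = 0 := by decide
  rcases h with rfl | rfl <;> simp [sgn, h2]

section Conjugation

variable {ι : Type} [Fintype ι] [DecidableEq ι] {A : Type} [Ring A] [Algebra ℚ A]
variable {S : SuperAlg ι A} {E Einv : ι → ι → A} {sq : A}

theorem mul_comm_of_even (hsq : sq ∈ S.hom 0) {p : ZMod 2} {a : A} (ha : a ∈ S.hom p) :
    sq * a = a * sq := by
  have h := S.supercomm hsq ha
  simpa [sgn] using h

theorem D_even_mul (hsq : sq ∈ S.hom 0) (i : ι) (f : A) :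
    S.D i (sq * f) = S.D i sq * f + sq * S.D i f := by
  have h := S.D_leibniz i f hsq
  simpa [sgn] using h

theorem nu1_mem (hE : S.AntiSymp E Einv) : S.nu1 E ∈ S.hom 1 := by
  refine Submodule.sum_mem _ fun a _ => Submodule.sum_mem _ fun b _ => Submodule.smul_mem _ _ ?_
  have h := S.D_mem b (S.D_mem a (hE.E_mem a b))
  convert h using 2
  generalize S.ε a = x, S.ε b = y
  revert x y; decide

theorem nu2_mem (hE : S.AntiSymp E Einv) : S.nu2 E Einv ∈ S.hom 1 := by
  refine Submodule.sum_mem _ fun a _ => Submodule.sum_mem _ fun b _ => Submodule.sum_mem _ fun c _ =>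
    Submodule.sum_mem _ fun d _ => Submodule.smul_mem _ _ ?_
  have h := S.mul_mem (S.D_mem d (hE.E_mem a b))
    (S.mul_mem (hE.Einv_mem b c) (S.D_mem a (hE.E_mem c d)))
  convert h using 2
  generalize S.ε a = x, S.ε b = y, S.ε c = z, S.ε d = w
  revert x y z w; decide

/-- The gradient pairing `(-1)^{ε_A} (∂_A √ρ) E^{AB} (∂_B g)` common to both sides. -/
def cross (S : SuperAlg ι A) (E : ι → ι → A) (sq g : A) : A :=
  ∑ a, ∑ b, sgn (S.ε a) • (S.D a sq * (E a b * S.D b g))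

/-- The two first-order cross terms in `Δ_1 (√ρ g)` agree, by skewsymmetry of `E`. -/
theorem cross_eq (hE : S.AntiSymp E Einv) (hsq : sq ∈ S.hom 0) (g : A) :
    ∑ a, ∑ b, sgn (S.ε a) • (E a b * S.D b sq * S.D a g) = S.cross E sq g := by
  rw [cross, Finset.sum_comm]
  refine Finset.sum_congr rfl fun a _ => Finset.sum_congr rfl fun b _ => ?_
  have h1 : E a b * S.D a sq
      = sgn ((S.ε a + S.ε b + 1) * (0 + S.ε a)) • (S.D a sq * E a b) :=
    S.supercomm (hE.E_mem a b) (S.D_mem a hsq)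
  rw [hE.E_skew b a, smul_mul_assoc, h1, smul_smul, smul_mul_assoc, smul_smul, neg_sgn,
    sgn_mul_sgn, sgn_mul_sgn, mul_assoc]
  congr 2
  generalize S.ε a = x, S.ε b = y
  revert x y; decide

theorem lap_zero_apply (g : A) : S.lap (fun _ => (0 : A)) E g
    = (1/2 : ℚ) • ∑ a, ∑ b, sgn (S.ε a) • S.D a (E a b * S.D b g) := by
  simp [lap, L, LinearMap.sum_apply]

theorem lap_zero_mul (hE : S.AntiSymp E Einv) (hsq : sq ∈ S.hom 0) (g : A) :
    S.lap (fun _ => (0 : A)) E (sq * g)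
      = S.lap (fun _ => (0 : A)) E sq * g + S.cross E sq g
        + sq * S.lap (fun _ => (0 : A)) E g := by
  have key : ∀ a b, S.D a (E a b * S.D b (sq * g))
      = S.D a (E a b * S.D b sq) * g + E a b * S.D b sq * S.D a g
        + S.D a sq * (E a b * S.D b g) + sq * S.D a (E a b * S.D b g) := by
    intro a b
    have h1 := S.D_leibniz a g (S.mul_mem (hE.E_mem a b) (S.D_mem b hsq))
    have hs : sgn (S.ε a * (S.ε a + S.ε b + 1 + (0 + S.ε b))) = 1 := by
      rw [sgn, if_pos]
      generalize S.ε a = x, S.ε b = y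
      revert x y; decide
    rw [hs, one_smul] at h1
    rw [D_even_mul hsq, mul_add, ← mul_assoc, map_add, h1, ← mul_assoc,
      ← mul_comm_of_even hsq (hE.E_mem a b), mul_assoc sq, D_even_mul hsq]
    abel
  have hc := cross_eq hE hsq g
  simp only [lap_zero_apply, key, smul_add, Finset.sum_add_distrib, hc]
  rw [← cross]
  simp only [smul_mul_assoc, mul_smul_comm, Finset.sum_mul, Finset.mul_sum]
  module

theorem sq_mul_lapRho {ρ ρinv sqinv : A} (hsq : sq ∈ S.hom 0) (hρ : ρ ∈ S.hom 0)
    (hρρinv : ρ * ρinv = 1) (hρinvρ : ρinv * ρ = 1) (hsqsq : sq * sq = ρ)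
    (hsqinvsq : sqinv * sq = 1) (g : A) :
    sq * S.lapRho E ρ ρinv g
      = S.cross E sq g + sq * S.lap (fun _ => (0 : A)) E g := by
  -- `√ρ ρ⁻¹ √ρ = 1`, because `√ρ` cancels from `√ρ √ρ ρ⁻¹ √ρ = √ρ`.
  have h1 : sq * ρinv * sq = 1 := by
    calc sq * ρinv * sq = sqinv * sq * (sq * ρinv * sq) := by rw [hsqinvsq, one_mul]
      _ = sqinv * (sq * sq * ρinv) * sq := by noncomm_ring
      _ = 1 := by rw [hsqsq, hρρinv, mul_one, hsqinvsq]
  have hD : ∀ a, sq * (ρinv * S.D a ρ) = (2 : ℚ) • S.D a sq := by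
    intro a
    rw [← hsqsq, D_even_mul hsq, ← mul_comm_of_even hsq (S.D_mem a hsq), ← two_smul ℚ,
      mul_smul_comm, mul_smul_comm, ← mul_assoc, ← mul_assoc, h1, one_mul]
  have key : ∀ a b, sq * (ρinv * S.D a (ρ * (E a b * S.D b g)))
      = (2 : ℚ) • (S.D a sq * (E a b * S.D b g)) + sq * S.D a (E a b * S.D b g) := by
    intro a b
    rw [D_even_mul hρ, mul_add, mul_add, ← mul_assoc ρinv, ← mul_assoc sq, hD, smul_mul_assoc,
      ← mul_assoc ρinv ρ, hρinvρ, one_mul]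
  have hl : S.lapRho E ρ ρinv g = (1/2 : ℚ) • ∑ a, ∑ b, sgn (S.ε a) •
      (ρinv * S.D a (ρ * (E a b * S.D b g))) := by
    simp [lapRho, L, LinearMap.sum_apply]
  rw [hl, lap_zero_apply, cross]
  simp only [mul_smul_comm, Finset.mul_sum, key, smul_add, Finset.sum_add_distrib,
    smul_comm _ (2 : ℚ), ← Finset.smul_sum]
  module

end Conjugation

/-- Khudaverdian's operator `Δ_E = Δ_1 + ν^{(1)}/8 - ν^{(2)}/24` equals
`Δ = Δ_ρ + ν_ρ` conjugated with `√ρ`; in particular `√ρ Δ (1/√ρ)` is independent of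
`ρ`, since the left-hand side does not involve `ρ`. -/
theorem lapE_eq_conjugated_lapRho
    {ι : Type} [Fintype ι] [DecidableEq ι] {A : Type} [Ring A] [Algebra ℚ A]
    (S : SuperAlg ι A) (E Einv : ι → ι → A) (ρ ρinv sq sqinv : A)
    (hE : S.AntiSymp E Einv) (hJac : S.JacobiId E)
    (hρ : ρ ∈ S.hom 0) (hsq : sq ∈ S.hom 0)
    (hρρinv : ρ * ρinv = 1) (hρinvρ : ρinv * ρ = 1)
    (hsqsq : sq * sq = ρ)
    (hsqsqinv : sq * sqinv = 1) (hsqinvsq : sqinv * sq = 1) :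
    S.lapE E Einv
      = L sq ∘ₗ (S.lapRho E ρ ρinv + L (S.nuRho E Einv sq sqinv)) ∘ₗ L sqinv := by
  ext f
  obtain ⟨g, rfl⟩ : ∃ g, f = sq * g := ⟨sqinv * f, by rw [← mul_assoc, hsqsqinv, one_mul]⟩
  have hg : sqinv * (sq * g) = g := by rw [← mul_assoc, hsqinvsq, one_mul]
  have hν : sq * ((1/8 : ℚ) • S.nu1 E - (1/24 : ℚ) • S.nu2 E Einv)
      = ((1/8 : ℚ) • S.nu1 E - (1/24 : ℚ) • S.nu2 E Einv) * sq :=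
    mul_comm_of_even hsq
      (Submodule.sub_mem _ (Submodule.smul_mem _ _ (nu1_mem hE))
        (Submodule.smul_mem _ _ (nu2_mem hE)))
  have hlap := sq_mul_lapRho (E := E) hsq hρ hρρinv hρinvρ hsqsq hsqinvsq g
  simp only [lapE, nuRho, nuRho0, L, LinearMap.add_apply, LinearMap.comp_apply,
    LinearMap.mulLeft_apply, hg]
  rw [add_sub_assoc, add_mul, mul_add, mul_add, hlap, lap_zero_mul hE hsq,
    ← mul_assoc _ sq g, ← hν, mul_assoc sqinv, ← mul_assoc sq sqinv, hsqsqinv, one_mul,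
    mul_assoc sq _ g]
  abel

end SuperAlg
end
end

section
/- (Proposition 3 of the paper) For an arbitrary antisymplectic, torsion-free, and F-compatible connection ∇ with Christoffel symbols Γ^A{}_{BC}, the odd scalar curvature R = R_{AB}E^{BA}, where R_{AB} = R^C{}_{CAB} is the Ricci tensor of ∇, depends only on E and F through the odd scalar ν_F: R = -8 ν_F, even if the line bundle connection F is not flat. In particular, R does not depend on the choice of connection Γ^A{}_{BC}. -/
/-!
The odd scalar curvature is computed by eliminating the Christoffel symbols term by term.

Put `V^C = (-1)^{ε_C} Γ^C{}_{AB} E^{BA}`. Contracting `∇E = 0` and using that the trace of `Γ`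
is `F` expresses `V` through `E` and `F` alone (`Gup_trace_E`). In `R`, the term with `∂_C Γ^C`
is integrated by parts into `∂_C V^C` minus `Γ · ∂E`; the trace term is `F_C V^C`, and the term
with the derivative of the trace is `∂F · E`. The remaining `Γ · ∂E` and `Γ Γ E` terms are
multiples of one quadratic expression `quad`: by `∇E = 0` and vanishing torsion,
the former contributes `2 quad` (`Gup_mul_D_E`) and the latter `-quad`, so they add up to `quad`
(`scalarR_eq`). The Leibniz rule for the field `F_B E^{BA}` (`sum_D_liftF`) collects the
`F`-dependent terms into `-8 ν_F^{(0)}`, and the rest of `∂_C V^C` is `-ν^{(1)}`.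

It remains to see that `ν^{(2)} = 3 quad` (`nu2_eq`). Substituting `∇E = 0` for both factors `∂E`
in `ν^{(2)}` gives four terms. In three of them `E_{BC}` cancels against a neighbouring `E` and
the result is `quad`; the fourth vanishes because the Christoffel symbols are graded symmetric
in their lower indices while the two factors `E` contracted with them are odd in the relevant
exchange (`raised_inv_raised_eq_zero`).

Signs `(-1)^p` with `p` a polynomial in the parities are multiplied with `sgn_add`; the
resulting identities of exponents hold pointwise on `ZMod 2`.
-/

open scoped BigOperators

noncomputable section

/-! ### Signs -/

section Signs

theorem sgn_add (p q : ZMod 2) : sgn (p + q) = sgn p * sgn q := by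
  have h : ∀ p q : ZMod 2, (p + q = 0 ↔ (p = 0 ↔ q = 0)) := by decide
  unfold sgn
  by_cases hp : p = 0 <;> by_cases hq : q = 0 <;> simp [hp, hq, h]

theorem sgn_mul_self (p : ZMod 2) : sgn p * sgn p = 1 := by
  unfold sgn; split_ifs <;> norm_num

theorem sgn_one : sgn 1 = -1 := by simp [sgn]

theorem neg_sgn (p : ZMod 2) : -sgn p = sgn (p + 1) := by
  rw [sgn_add, sgn_one]; ring

theorem sgn_sq (p : ZMod 2) : sgn (p * p) = sgn p :=
  congrArg sgn ((by decide : ∀ p : ZMod 2, p * p = p) p)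

end Signs

/-! ### Relabelling summation indices -/

section Sums

variable {ι A : Type} [Fintype ι] [AddCommGroup A]

theorem sum_rot (f : ι → ι → ι → A) :
    ∑ a, ∑ b, ∑ c, f a b c = ∑ b, ∑ c, ∑ a, f a b c :=
  (Finset.sum_comm_cycle (f := fun b c a => f a b c)).symm

theorem sum_rev (f : ι → ι → ι → A) :
    ∑ a, ∑ b, ∑ c, f a b c = ∑ c, ∑ b, ∑ a, f a b c := by
  rw [sum_rot, Finset.sum_comm]

/-- A sum over four indices whose summand is odd under exchanging the first two indices
with the last two vanishes. -/
theorem sum_eq_zero_of_swap_odd [Module ℚ A] (f : ι → ι → ι → ι → A)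
    (hf : ∀ a d g h, f a d g h = -f g h a d) :
    ∑ a, ∑ d, ∑ g, ∑ h, f a d g h = 0 := by
  have swap : ∑ a, ∑ d, ∑ g, ∑ h, f a d g h = ∑ a, ∑ d, ∑ g, ∑ h, f g h a d := by
    have h := Fintype.sum_equiv
      (⟨fun p => (p.2.2.1, p.2.2.2, p.1, p.2.1), fun p => (p.2.2.1, p.2.2.2, p.1, p.2.1),
        fun _ => rfl, fun _ => rfl⟩ : ι × ι × ι × ι ≃ ι × ι × ι × ι)
      (fun p => f p.1 p.2.1 p.2.2.1 p.2.2.2) (fun p => f p.2.2.1 p.2.2.2 p.1 p.2.1)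
      (fun _ => rfl)
    simpa only [Fintype.sum_prod_type] using h
  have key : ∑ a, ∑ d, ∑ g, ∑ h, f a d g h = -∑ a, ∑ d, ∑ g, ∑ h, f a d g h := by
    conv_rhs => rw [swap]
    simp only [← Finset.sum_neg_distrib, ← hf]
  have h2 : (2 : ℚ) • ∑ a, ∑ d, ∑ g, ∑ h, f a d g h = 0 := by
    rw [two_smul]; nth_rewrite 1 [key]; exact neg_add_cancel _
  exact (smul_eq_zero.mp h2).resolve_left two_ne_zero

end Sums

namespace SuperAlg

/-! ### Contractions of the Christoffel symbols -/

section Curvature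

variable {ι : Type} [Fintype ι] [DecidableEq ι] {A : Type} [Ring A] [Algebra ℚ A]
variable (S : SuperAlg ι A) {E Einv : ι → ι → A} {F : ι → A} {Gm : ι → ι → ι → A}

/-- The Christoffel symbols with their last index raised, `Γ_A{}^B{}_D E^{DC}`. -/
def raised (E : ι → ι → A) (Gm : ι → ι → ι → A) (a b c : ι) : A :=
  ∑ d, Gm a b d * E d c

/-- The quadratic expression `(-1)^{ε_A ε_C} Γ_D{}^A{}_C Γ_A{}^C{}_H E^{HD}` to which
all terms of `R` and `ν^{(2)}` quadratic in `Γ`, other than those with a trace of `Γ`, reduce. -/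
def quad (E : ι → ι → A) (Gm : ι → ι → ι → A) : A :=
  ∑ a, ∑ c, ∑ d, sgn (S.ε a * S.ε c) • (Gm d a c * raised E Gm a c d)

/-- Exchanging the outer factors of a product of three homogeneous elements. -/
theorem swap_outer {p q r : ZMod 2} {x m y : A} (hx : x ∈ S.hom p) (hm : m ∈ S.hom r)
    (hy : y ∈ S.hom q) :
    x * (m * y) = sgn (p * (r + q) + r * q) • (y * (m * x)) := by
  rw [S.supercomm hx (S.mul_mem hm hy), S.supercomm hm hy, sgn_add, mul_smul,
    smul_mul_assoc, mul_assoc]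

theorem Gm_eq (Gm : ι → ι → ι → A) (a b c : ι) :
    Gm a b c = sgn (S.ε a * S.ε b) • S.Gup Gm b a c := by
  rw [Gup, smul_smul, mul_comm (S.ε b), sgn_mul_self, one_smul]

theorem raised_mem (hE : S.AntiSymp E Einv)
    (hGm : ∀ a b c, Gm a b c ∈ S.hom (S.ε a + S.ε b + S.ε c)) (a b c : ι) :
    raised E Gm a b c ∈ S.hom (S.ε a + S.ε b + S.ε c + 1) := by
  refine Submodule.sum_mem _ fun d _ => ?_
  have h := S.mul_mem (hGm a b d) (hE.E_mem d c)
  have e : S.ε a + S.ε b + S.ε d + (S.ε d + S.ε c + 1) = S.ε a + S.ε b + S.ε c + 1 := by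
    generalize S.ε a = a; generalize S.ε b = b; generalize S.ε c = c; generalize S.ε d = d
    revert a b c d; decide
  rwa [e] at h

theorem raised_mul_inv (hE : S.AntiSymp E Einv) (a b d : ι) :
    ∑ c, raised E Gm a b c * Einv c d = Gm a b d := by
  simp only [raised, Finset.sum_mul, mul_assoc]
  rw [Finset.sum_comm]
  simp [← Finset.mul_sum, hE.mul_inv]

/-- Vanishing torsion, in terms of `Γ_A{}^B{}_C`. -/
theorem torsionFree_lower
    (htf : ∀ a b c,
      S.Gup Gm a b c = - sgn ((S.ε b + 1) * (S.ε c + 1)) • S.Gup Gm a c b) (a b c : ι) :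
    Gm a b c = sgn (S.ε a * S.ε b + S.ε b * S.ε c + (S.ε a + 1) * (S.ε c + 1) + 1)
      • Gm c b a := by
  rw [S.Gm_eq Gm a b c, htf, Gup, smul_smul, smul_smul]
  congr 1
  rw [neg_sgn, ← sgn_add, ← sgn_add]
  congr 1
  ring

/-- The antisymplectic condition solved for the derivatives of `E`. -/
theorem D_E
    (hanti : ∀ a b c,
      S.D a (E b c) + (∑ d, Gm a b d * E d c)
        - sgn ((S.ε b + 1) * (S.ε c + 1)) • ∑ d, Gm a c d * E d b = 0) (a b c : ι) :
    S.D a (E b c) = -raised E Gm a b c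
      + sgn ((S.ε b + 1) * (S.ε c + 1)) • raised E Gm a c b := by
  have h := hanti a b c
  change S.D a (E b c) + raised E Gm a b c - _ • raised E Gm a c b = 0 at h
  rw [← sub_eq_zero, ← h]
  abel

/-- The contraction of two raised Christoffel symbols with the inverse of `E` that
does not reduce to `quad` vanishes, since it is odd under transposing the (graded
symmetric) lower index pairs of both symbols. -/
theorem raised_inv_raised_eq_zero (hE : S.AntiSymp E Einv)
    (hGm : ∀ a b c, Gm a b c ∈ S.hom (S.ε a + S.ε b + S.ε c))
    (htf : ∀ a b c,
      S.Gup Gm a b c = - sgn ((S.ε b + 1) * (S.ε c + 1)) • S.Gup Gm a c b) :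
    ∑ a, ∑ b, ∑ c, ∑ d, sgn (S.ε a * S.ε c + (S.ε a + 1) * (S.ε b + 1)) •
      (raised E Gm d b a * (Einv b c * raised E Gm a c d)) = 0 := by
  rw [sum_rot]
  refine Finset.sum_eq_zero fun b _ => Finset.sum_eq_zero fun c _ => ?_
  simp only [raised, Finset.sum_mul, Finset.mul_sum, Finset.smul_sum]
  refine sum_eq_zero_of_swap_odd (fun a d g h =>
    sgn (S.ε a * S.ε c + (S.ε a + 1) * (S.ε b + 1)) •
      (Gm d b h * E h a * (Einv b c * (Gm a c g * E g d)))) fun a d g h => ?_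
  have hf := S.torsionFree_lower htf
  change _ = -(sgn (S.ε g * S.ε c + (S.ε g + 1) * (S.ε b + 1)) •
      (Gm h b d * E d g * (Einv b c * (Gm g c a * E a h))))
  have hsw := S.swap_outer (hE.E_mem g d) (S.mul_mem (hE.Einv_mem b c) (hGm a c g))
    (hE.E_mem h a)
  rw [mul_assoc (Einv b c), mul_assoc (Einv b c)] at hsw
  rw [hf h b d, hf g c a, hE.E_skew d g, hE.E_skew a h]
  simp only [mul_assoc, smul_mul_assoc, mul_smul_comm, smul_smul]
  rw [hsw, mul_smul_comm, smul_smul, ← neg_smul]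
  simp only [neg_sgn, ← sgn_add]
  congr 2
  generalize S.ε a = a; generalize S.ε b = b; generalize S.ε c = c
  generalize S.ε d = d; generalize S.ε g = g; generalize S.ε h = h
  revert a b c d g h; decide

/-- Of the four products arising from `∇E = 0` in `ν^{(2)}`, three are equal to `quad` and
one vanishes. -/
theorem nu2_eq (hE : S.AntiSymp E Einv)
    (hGm : ∀ a b c, Gm a b c ∈ S.hom (S.ε a + S.ε b + S.ε c))
    (hanti : ∀ a b c,
      S.D a (E b c) + (∑ d, Gm a b d * E d c)
        - sgn ((S.ε b + 1) * (S.ε c + 1)) • ∑ d, Gm a c d * E d b = 0)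
    (htf : ∀ a b c,
      S.Gup Gm a b c = - sgn ((S.ε b + 1) * (S.ε c + 1)) • S.Gup Gm a c b) :
    S.nu2 E Einv = (3 : ℚ) • S.quad E Gm := by
  have hf := S.torsionFree_lower htf
  -- `E_{BC}` cancels against the first raised symbol
  have h1 : ∑ a, ∑ b, ∑ c, ∑ d, sgn (S.ε a * S.ε c) •
      (raised E Gm d a b * (Einv b c * raised E Gm a c d)) = S.quad E Gm := by
    unfold quad
    refine Finset.sum_congr rfl fun a _ => ?_
    rw [sum_rot]
    refine Finset.sum_congr rfl fun c _ => Finset.sum_congr rfl fun d _ => ?_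
    simp only [← mul_assoc]
    rw [← Finset.smul_sum, ← Finset.sum_mul, raised_mul_inv S hE]
  have h2 : ∑ a, ∑ b, ∑ c, ∑ d, sgn (S.ε a * S.ε c + (S.ε c + 1) * (S.ε d + 1) + 1) •
      (raised E Gm d a b * (Einv b c * raised E Gm a d c)) = S.quad E Gm := by
    unfold quad
    refine Finset.sum_congr rfl fun a _ => ?_
    rw [sum_rot, Finset.sum_comm]
    refine Finset.sum_congr rfl fun d _ => Finset.sum_congr rfl fun c _ => ?_
    simp only [← mul_assoc]
    rw [← Finset.smul_sum, ← Finset.sum_mul, raised_mul_inv S hE, hf d a c,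
      smul_mul_assoc, smul_smul, ← sgn_add]
    congr 2
    generalize S.ε a = a; generalize S.ε c = c; generalize S.ε d = d
    revert a c d; decide
  -- here `E_{BC}` cancels against the second raised symbol, so the factors are reversed first
  have h4 : ∑ a, ∑ b, ∑ c, ∑ d,
      sgn (S.ε a * S.ε c + (S.ε a + 1) * (S.ε b + 1) + (S.ε c + 1) * (S.ε d + 1)) •
      (raised E Gm d b a * (Einv b c * raised E Gm a d c)) = S.quad E Gm := by
    unfold quad
    rw [sum_rev (fun a c d => sgn (S.ε a * S.ε c) • (Gm d a c * raised E Gm a c d))]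
    refine Finset.sum_congr rfl fun a _ => Finset.sum_congr rfl fun b _ => ?_
    rw [Finset.sum_comm]
    refine Finset.sum_congr rfl fun d _ => ?_
    rw [← raised_mul_inv (Gm := Gm) S hE a d b, Finset.sum_mul, Finset.smul_sum]
    refine Finset.sum_congr rfl fun c _ => ?_
    rw [hE.Einv_skew b c, mul_assoc,
      S.swap_outer (raised_mem S hE hGm a d c) (hE.Einv_mem c b) (raised_mem S hE hGm d b a),
      smul_mul_assoc, mul_smul_comm, smul_smul, smul_smul, neg_sgn, ← sgn_add, ← sgn_add]
    congr 2
    generalize S.ε a = a; generalize S.ε b = b; generalize S.ε c = c; generalize S.ε d = d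
    revert a b c d; decide
  have h3 := S.raised_inv_raised_eq_zero hE hGm htf
  have h : S.nu2 E Einv = S.quad E Gm + S.quad E Gm + S.quad E Gm - 0 := by
    nth_rewrite 1 [← h1]
    nth_rewrite 1 [← h2]
    rw [← h4, ← h3]
    simp only [← Finset.sum_add_distrib, ← Finset.sum_sub_distrib]
    unfold nu2
    refine Finset.sum_congr rfl fun a _ => Finset.sum_congr rfl fun b _ =>
      Finset.sum_congr rfl fun c _ => Finset.sum_congr rfl fun d _ => ?_
    rw [S.D_E hanti, S.D_E hanti]
    simp only [sgn_add, sgn_one, mul_add, add_mul, neg_mul, mul_neg, smul_mul_assoc,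
      mul_smul_comm, smul_neg, smul_add]
    module
  rw [h]
  module

/-- Both terms of `∂E` given by `∇E = 0` contribute `-quad`, the second one after
transposing the lower indices of `Γ`. -/
theorem Gup_mul_D_E
    (hanti : ∀ a b c,
      S.D a (E b c) + (∑ d, Gm a b d * E d c)
        - sgn ((S.ε b + 1) * (S.ε c + 1)) • ∑ d, Gm a c d * E d b = 0)
    (htf : ∀ a b c,
      S.Gup Gm a b c = - sgn ((S.ε b + 1) * (S.ε c + 1)) • S.Gup Gm a c b) :
    ∑ a, ∑ b, ∑ c, sgn (S.ε c * (S.ε a + S.ε b)) • (S.Gup Gm c a b * S.D c (E b a))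
      = (-2 : ℚ) • S.quad E Gm := by
  have h1 : ∑ a, ∑ b, ∑ c, sgn (S.ε c * S.ε b) • (Gm a c b * raised E Gm c b a)
      = S.quad E Gm := by
    rw [sum_rev]; rfl
  have h2 : ∑ a, ∑ b, ∑ c, sgn (S.ε c * S.ε a) • (Gm b c a * raised E Gm c a b)
      = S.quad E Gm := by
    rw [Finset.sum_comm, sum_rev]; rfl
  have h : (-2 : ℚ) • S.quad E Gm = -S.quad E Gm - S.quad E Gm := by module
  rw [h]
  nth_rewrite 1 [← h1]
  rw [← h2]
  simp only [← Finset.sum_neg_distrib, ← Finset.sum_sub_distrib]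
  refine Finset.sum_congr rfl fun a _ => Finset.sum_congr rfl fun b _ =>
    Finset.sum_congr rfl fun c _ => ?_
  rw [S.D_E hanti, Gup]
  have e : sgn (S.ε c * (S.ε a + S.ε b)) • sgn (S.ε c * S.ε a) • (Gm a c b * raised E Gm c b a)
      = sgn (S.ε c * S.ε b) • (Gm a c b * raised E Gm c b a) := by
    rw [smul_smul, ← sgn_add]
    congr 2
    generalize S.ε a = a; generalize S.ε b = b; generalize S.ε c = c
    revert a b c; decide
  have e' : sgn (S.ε c * (S.ε a + S.ε b)) • sgn (S.ε c * S.ε a) •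
        sgn ((S.ε b + 1) * (S.ε a + 1)) • (Gm a c b * raised E Gm c a b)
      = -(sgn (S.ε c * S.ε a) • (Gm b c a * raised E Gm c a b)) := by
    rw [S.torsionFree_lower htf a c b, smul_mul_assoc, smul_smul, smul_smul, smul_smul,
      ← sgn_add, ← sgn_add, ← sgn_add, ← neg_smul, neg_sgn]
    congr 2
    generalize S.ε a = a; generalize S.ε b = b; generalize S.ε c = c
    revert a b c; decide
  rw [smul_mul_assoc, mul_add (Gm a c b), mul_smul_comm, mul_neg, smul_add, smul_add,
    smul_neg, smul_neg, e, e', ← sub_eq_add_neg]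

/-! ### The part depending on the line bundle connection -/

/-- The vector field `(-1)^{ε_B} F_B E^{BA}`. -/
def liftF (E : ι → ι → A) (F : ι → A) (a : ι) : A :=
  ∑ b, sgn (S.ε b) • (F b * E b a)

/-- The divergence `(-1)^{ε_B} ∂_B E^{BA}`. -/
def divE (E : ι → ι → A) (a : ι) : A := ∑ b, sgn (S.ε b) • S.D b (E b a)

theorem liftF_eq (hE : S.AntiSymp E Einv) (hF : ∀ a, F a ∈ S.hom (S.ε a)) (a : ι) :
    S.liftF E F a = ∑ b, sgn (S.ε a) • (E a b * F b) := by
  refine Finset.sum_congr rfl fun b _ => ?_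
  rw [S.supercomm (hF b) (hE.E_mem b a), hE.E_skew b a, smul_mul_assoc, smul_smul, smul_smul,
    neg_sgn, ← sgn_add, ← sgn_add]
  congr 2
  generalize S.ε a = a; generalize S.ε b = b
  revert a b; decide

theorem nuF0_eq (hE : S.AntiSymp E Einv) (hF : ∀ a, F a ∈ S.hom (S.ε a)) :
    S.nuF0 E F = (1/4 : ℚ) • (∑ a, S.D a (S.liftF E F a)
      + (1/2 : ℚ) • ∑ a, F a * S.liftF E F a) := by
  unfold nuF0
  congr 1
  rw [Finset.smul_sum, ← Finset.sum_add_distrib]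
  refine Finset.sum_congr rfl fun a _ => ?_
  rw [S.liftF_eq hE hF, map_sum, Finset.mul_sum, Finset.smul_sum, ← Finset.sum_add_distrib]
  refine Finset.sum_congr rfl fun b _ => ?_
  rw [map_smul, mul_smul_comm]
  module

theorem sum_D_liftF (hE : S.AntiSymp E Einv) (hF : ∀ a, F a ∈ S.hom (S.ε a)) :
    ∑ a, S.D a (S.liftF E F a)
      = ∑ a, ∑ b, sgn (S.ε b) • (S.D a (F b) * E b a) + ∑ a, F a * S.divE E a := by
  have h : ∑ a, F a * S.divE E a = ∑ a, ∑ b, sgn (S.ε a) • (F b * S.D a (E a b)) := by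
    simp only [divE, Finset.mul_sum, mul_smul_comm]
    rw [Finset.sum_comm]
  rw [h]
  simp only [← Finset.sum_add_distrib]
  refine Finset.sum_congr rfl fun a _ => ?_
  rw [liftF, map_sum]
  refine Finset.sum_congr rfl fun b _ => ?_
  rw [map_smul, S.D_leibniz a _ (hF b), smul_add]
  congr 1
  rw [hE.E_skew b a, map_smul, mul_smul_comm, smul_smul, smul_smul, neg_sgn, ← sgn_add,
    ← sgn_add]
  congr 2
  generalize S.ε a = a; generalize S.ε b = b
  revert a b; decide

/-- The contraction `(-1)^{ε_C} Γ^C{}_{AB} E^{BA}`, which is determined by `E` and `F`: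
contracting the antisymplectic condition leaves only it and the trace of `Γ`. -/
theorem Gup_trace_E
    (hanti : ∀ a b c,
      S.D a (E b c) + (∑ d, Gm a b d * E d c)
        - sgn ((S.ε b + 1) * (S.ε c + 1)) • ∑ d, Gm a c d * E d b = 0)
    (hFcomp : ∀ a, ∑ b, S.Gup Gm b b a = sgn (S.ε a) • F a) (c : ι) :
    ∑ a, ∑ b, sgn (S.ε c) • (S.Gup Gm c a b * E b a)
      = -S.divE E c - S.liftF E F c := by
  have h : S.liftF E F c = ∑ a, sgn (S.ε a) • raised E Gm a a c := by
    simp only [liftF, raised, Finset.smul_sum]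
    rw [Finset.sum_comm]
    refine Finset.sum_congr rfl fun d _ => ?_
    rw [← smul_mul_assoc, ← hFcomp, Finset.sum_mul]
    refine Finset.sum_congr rfl fun a _ => ?_
    rw [Gup, sgn_sq, smul_mul_assoc]
  rw [h, divE, ← Finset.sum_neg_distrib, ← Finset.sum_sub_distrib]
  refine Finset.sum_congr rfl fun a _ => ?_
  have h' : ∑ b, sgn (S.ε c) • (S.Gup Gm c a b * E b a)
      = sgn (S.ε c + S.ε c * S.ε a) • raised E Gm a c a := by
    simp only [raised, Finset.smul_sum, Gup, smul_mul_assoc, smul_smul, sgn_add]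
  have hs : sgn (S.ε a) • sgn ((S.ε a + 1) * (S.ε c + 1)) • raised E Gm a c a
      = -(sgn (S.ε c + S.ε c * S.ε a) • raised E Gm a c a) := by
    rw [smul_smul, ← sgn_add, ← neg_smul, neg_sgn]
    congr 2
    generalize S.ε a = a; generalize S.ε c = c
    revert a c; decide
  rw [h', S.D_E hanti, smul_add, hs, smul_neg]
  abel

/-! ### The odd scalar curvature -/

/-- The odd scalar curvature in terms of `V = -divE - liftF`, the contraction of `Γ`
computed in `Gup_trace_E`. -/
theorem scalarR_eq
    (hGm : ∀ a b c, Gm a b c ∈ S.hom (S.ε a + S.ε b + S.ε c))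
    (hanti : ∀ a b c,
      S.D a (E b c) + (∑ d, Gm a b d * E d c)
        - sgn ((S.ε b + 1) * (S.ε c + 1)) • ∑ d, Gm a c d * E d b = 0)
    (htf : ∀ a b c,
      S.Gup Gm a b c = - sgn ((S.ε b + 1) * (S.ε c + 1)) • S.Gup Gm a c b)
    (hFcomp : ∀ a, ∑ b, S.Gup Gm b b a = sgn (S.ε a) • F a) :
    S.scalarR (fun a b c => S.Gup Gm a b c) E
      = ∑ c, S.D c (-S.divE E c - S.liftF E F c)
        + ∑ c, F c * (-S.divE E c - S.liftF E F c)
        - ∑ a, ∑ b, sgn (S.ε b) • (S.D a (F b) * E b a) + S.quad E Gm := by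
  set G := S.Gup Gm with hG
  have hGmem : ∀ a b c, G a b c ∈ S.hom (S.ε b + S.ε a + S.ε c) := fun a b c =>
    Submodule.smul_mem _ _ (hGm b a c)
  -- the derivative term `(-1)^{ε_C} ∂_C Γ^C{}_{AB} E^{BA}`, integrated by parts
  have h1 : ∑ a, ∑ b, ∑ c, sgn (S.ε c) • (S.D c (G c a b) * E b a)
      = ∑ c, S.D c (-S.divE E c - S.liftF E F c) + (2 : ℚ) • S.quad E Gm := by
    have e : (2 : ℚ) • S.quad E Gm = -((-2 : ℚ) • S.quad E Gm) := by module
    rw [e, ← S.Gup_mul_D_E hanti htf]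
    simp only [← S.Gup_trace_E hanti hFcomp, map_sum, map_smul]
    rw [sum_rot (fun c a b => sgn (S.ε c) • S.D c (S.Gup Gm c a b * E b a))]
    simp only [← Finset.sum_neg_distrib, ← Finset.sum_add_distrib]
    refine Finset.sum_congr rfl fun a _ => Finset.sum_congr rfl fun b _ =>
      Finset.sum_congr rfl fun c _ => ?_
    rw [S.D_leibniz c _ (hGmem c a b), smul_add, smul_smul, ← sgn_add, add_assoc,
      left_eq_add, ← sub_eq_add_neg, sub_eq_zero]
    congr 2
    generalize S.ε a = a; generalize S.ε b = b; generalize S.ε c = c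
    revert a b c; decide
  have h2 : ∑ a, ∑ b, ∑ c, ∑ e, G c c e * G e a b * E b a
      = ∑ c, F c * (-S.divE E c - S.liftF E F c) := by
    simp only [← S.Gup_trace_E hanti hFcomp, Finset.mul_sum]
    rw [sum_rot (fun e a b => F e * (sgn (S.ε e) • (S.Gup Gm e a b * E b a)))]
    refine Finset.sum_congr rfl fun a _ => Finset.sum_congr rfl fun b _ => ?_
    rw [Finset.sum_comm]
    refine Finset.sum_congr rfl fun e _ => ?_
    rw [mul_smul_comm, ← smul_mul_assoc, ← hFcomp, Finset.sum_mul]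
    exact Finset.sum_congr rfl fun c _ => mul_assoc _ _ _
  have h3 : ∑ a, ∑ b, ∑ c, S.D a (G c c b) * E b a
      = ∑ a, ∑ b, sgn (S.ε b) • (S.D a (F b) * E b a) := by
    refine Finset.sum_congr rfl fun a _ => Finset.sum_congr rfl fun b _ => ?_
    rw [← Finset.sum_mul, ← map_sum, hFcomp, map_smul, smul_mul_assoc]
  have h4 : ∑ a, ∑ b, ∑ c, ∑ e, sgn (S.ε c * S.ε a) • (G c a e * G e c b * E b a)
      = S.quad E Gm := by
    have e1 : S.quad E Gm = ∑ a, ∑ c, ∑ e, ∑ b,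
        sgn (S.ε c * S.ε a) • (G c a e * G e c b * E b a) := by
      unfold quad
      rw [← sum_rot (fun a c e => sgn (S.ε c * S.ε e) • (Gm a c e * raised E Gm c e a))]
      refine Finset.sum_congr rfl fun a _ => Finset.sum_congr rfl fun c _ =>
        Finset.sum_congr rfl fun e _ => ?_
      rw [raised, Finset.mul_sum, Finset.smul_sum]
      refine Finset.sum_congr rfl fun b _ => ?_
      rw [hG, Gup, Gup, smul_mul_smul_comm, smul_mul_assoc, smul_smul, ← sgn_add, ← sgn_add,
        mul_assoc]
      congr 2
      generalize S.ε a = a; generalize S.ε e = e; generalize S.ε c = c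
      revert a e c; decide
    rw [e1]
    refine Finset.sum_congr rfl fun a _ => ?_
    rw [sum_rot]
  have h : S.scalarR G E = (∑ c, S.D c (-S.divE E c - S.liftF E F c) + (2 : ℚ) • S.quad E Gm)
      + ∑ c, F c * (-S.divE E c - S.liftF E F c)
      - ∑ a, ∑ b, sgn (S.ε b) • (S.D a (F b) * E b a) - S.quad E Gm := by
    nth_rewrite 2 [← h4]
    rw [← h1, ← h2, ← h3]
    simp only [← Finset.sum_add_distrib, ← Finset.sum_sub_distrib]
    refine Finset.sum_congr rfl fun a _ => Finset.sum_congr rfl fun b _ => ?_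
    rw [ricci, Finset.sum_mul]
    refine Finset.sum_congr rfl fun c _ => ?_
    simp only [riemRe, sgn_sq, smul_add, smul_smul, sgn_mul_self, one_smul, add_mul, sub_mul,
      smul_mul_assoc, Finset.sum_mul, Finset.smul_sum]
    abel
  rw [h]
  module

end Curvature

end SuperAlg

namespace SuperAlg

/-- Proposition 3: For an arbitrary antisymplectic, torsion-free and
`F`-compatible connection, the odd scalar curvature `R = R_{AB} E^{BA}` equals
`-8 ν_F`, even for non-flat `F`; in particular it does not depend on the connection. -/
theorem odd_scalar_curvature_eq_nuF
    {ι : Type} [Fintype ι] [DecidableEq ι] {A : Type} [Ring A] [Algebra ℚ A]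
    (S : SuperAlg ι A) (E Einv : ι → ι → A) (F : ι → A)
    (Gm : ι → ι → ι → A)
    (hE : S.AntiSymp E Einv) (hF : ∀ a, F a ∈ S.hom (S.ε a))
    (hJac : S.JacobiId E)
    (hGm_mem : ∀ a b c, Gm a b c ∈ S.hom (S.ε a + S.ε b + S.ε c))
    (hanti : ∀ a b c,
      S.D a (E b c) + (∑ d, Gm a b d * E d c)
        - sgn ((S.ε b + 1) * (S.ε c + 1)) • ∑ d, Gm a c d * E d b = 0)
    (htf : ∀ a b c,
      S.Gup Gm a b c = - sgn ((S.ε b + 1) * (S.ε c + 1)) • S.Gup Gm a c b)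
    (hFcomp : ∀ a, ∑ b, S.Gup Gm b b a = sgn (S.ε a) • F a) :
    S.scalarR (fun a b c => S.Gup Gm a b c) E = (-8 : ℚ) • S.nuF E Einv F := by
  have h1 : S.nu1 E = ∑ c, S.D c (S.divE E c) := by
    unfold nu1 divE
    rw [Finset.sum_comm]
    simp only [map_sum, map_smul]
  have hD := S.sum_D_liftF hE hF
  rw [S.scalarR_eq hGm_mem hanti htf hFcomp, nuF, S.nuF0_eq hE hF, h1,
    S.nu2_eq hE hGm_mem hanti htf]
  simp only [map_sub, map_neg, mul_sub, mul_neg, Finset.sum_sub_distrib,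
    Finset.sum_neg_distrib]
  rw [hD]
  module

end SuperAlg
end
end

section
/- Define γ_{ABC} = Γ_{ABC} - (1/3)(E_{AB} ∂⃖_C + E_{AC} ∂⃖_B (-1)^{ε_B ε_C}), where Γ_{ABC} = E_{AD} Γ^D{}_{BC} (-1)^{ε_B}. Then: (i) the antisymplectic condition (∇_A E)_{BC} = 0 is, granted the closedness relation for E_{AB}, equivalent to the purely algebraic symmetry γ_{ABC} = (-1)^{ε_A ε_B + ε_B ε_C + ε_C ε_A} γ_{CBA}; and (ii) for an antisymplectic torsion-free connection, γ_{ABC} is totally graded-symmetric: (-1)^{ε_A ε_B} γ_{BAC} = γ_{ABC} = (-1)^{ε_B ε_C} γ_{ACB}. -/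
/-!
The content is one linear identity. Subtracting the derivative terms from `Γ` is arranged so that,
by graded antisymmetry of `E_{AB}` and closedness,
`(-1)^{ε_A ε_B} γ_{BAC} - (-1)^{(ε_A+ε_B) ε_C} γ_{CAB}` differs from the same combination of `Γ`'s
by exactly `∂_A E_{BC}` (`gam_sub_gam`): of the four derivative terms, two are multiples of
`∂_A E_{BC}` and closedness converts the other two into a third one, cancelling the `1/3`. Hence
the antisymplectic condition says that this combination of `γ`'s vanishes, which is the
reflection symmetry `A ↔ C`. Absence of torsion gives the symmetry `B ↔ C`, since the subtracted
terms are already symmetric in `B`, `C`; these two transpositions generate all permutations.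
-/

open scoped BigOperators

noncomputable section

namespace SuperAlg

section

lemma sgn_add (p q : ZMod 2) : sgn (p + q) = sgn p * sgn q := by
  revert p q
  unfold sgn
  decide +kernel

lemma sgn_eq (p : ZMod 2) : sgn p = 1 ∨ sgn p = -1 := by
  unfold sgn
  split_ifs <;> simp

variable {ι : Type} [Fintype ι] [DecidableEq ι] {A : Type} [Ring A] [Algebra ℚ A]

/-- The defect of the reflection symmetry of `γ` equals the defect of the antisymplectic
condition. -/
lemma gam_sub_gam (S : SuperAlg ι A) {E Einv : ι → ι → A} (Gu : ι → ι → ι → A)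
    (hE : S.AntiSymp E Einv) (hcl : S.ClosedId Einv) (a b c : ι) :
    sgn (S.ε a * S.ε b) • S.gam Einv Gu b a c
        - sgn (S.ε b * S.ε c) • (sgn (S.ε a * S.ε c) • S.gam Einv Gu c a b)
      = sgn (S.ε a * S.ε b) • S.Glow Einv Gu b a c
        - sgn (S.ε b * S.ε c) • (sgn (S.ε a * S.ε c) • S.Glow Einv Gu c a b)
        - S.D a (Einv b c) := by
  have hc := hcl a b c
  have h1 : S.D a (Einv c b) = -sgn (S.ε c * S.ε b) • S.D a (Einv b c) := by
    rw [hE.Einv_skew c b, map_smul]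
  have h2 : S.D c (Einv b a) = -sgn (S.ε b * S.ε a) • S.D c (Einv a b) := by
    rw [hE.Einv_skew b a, map_smul]
  simp only [gam, mul_add, sgn_add, h1, h2]
  rw [mul_comm (S.ε b) (S.ε a), mul_comm (S.ε c) (S.ε b)] at *
  rw [mul_comm (S.ε c) (S.ε a)]
  -- Each sign is `±1`; in every case the identity is linear in the derivatives.
  rcases sgn_eq (S.ε a * S.ε b) with h | h <;>
  rcases sgn_eq (S.ε b * S.ε c) with h' | h' <;>
  rcases sgn_eq (S.ε a * S.ε c) with h'' | h'' <;>
  simp only [h, h', h''] at hc ⊢ <;>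
  first
    | linear_combination (norm := module) (1 / 3 : ℚ) • hc
    | linear_combination (norm := module) (-1 / 3 : ℚ) • hc

/-- Reflection symmetry of `γ`, with its first two indices interchanged, as the vanishing of the
left-hand side of `gam_sub_gam`. -/
lemma gam_reflect_iff (S : SuperAlg ι A) (Einv : ι → ι → A) (Gu : ι → ι → ι → A) (a b c : ι) :
    S.gam Einv Gu b a c
        = sgn (S.ε b * S.ε a + S.ε a * S.ε c + S.ε c * S.ε b) • S.gam Einv Gu c a b ↔
      sgn (S.ε a * S.ε b) • S.gam Einv Gu b a c
        - sgn (S.ε b * S.ε c) • (sgn (S.ε a * S.ε c) • S.gam Einv Gu c a b) = 0 := by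
  rw [sgn_add, sgn_add, mul_comm (S.ε b) (S.ε a), mul_comm (S.ε c) (S.ε b), sub_eq_zero]
  rcases sgn_eq (S.ε a * S.ε b) with h | h <;>
  rcases sgn_eq (S.ε b * S.ε c) with h' | h' <;>
  rcases sgn_eq (S.ε a * S.ε c) with h'' | h'' <;>
  simp [h, h', h'', neg_eq_iff_eq_neg]

/-- Torsion-freeness passes to `γ`, the subtracted terms being symmetric in `b`, `c`. -/
lemma gam_swap (S : SuperAlg ι A) {Einv : ι → ι → A} {Gu : ι → ι → ι → A}
    (ht : ∀ a b c, S.Glow Einv Gu a b c = sgn (S.ε b * S.ε c) • S.Glow Einv Gu a c b)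
    (a b c : ι) :
    S.gam Einv Gu a b c = sgn (S.ε b * S.ε c) • S.gam Einv Gu a c b := by
  simp only [gam, mul_add, sgn_add]
  rw [ht a b c, mul_comm (S.ε c) (S.ε b)]
  rcases sgn_eq (S.ε b * S.ε c) with h | h <;> simp only [h] <;> module

end

/-- (i) Granted the closedness relation for `E_{AB}`, the antisymplectic
condition `(∇_A E)_{BC} = 0` is equivalent to the algebraic symmetry
`γ_{ABC} = (-1)^{ε_A ε_B + ε_B ε_C + ε_C ε_A} γ_{CBA}`; (ii) for an antisymplectic
torsion-free connection, `γ_{ABC}` is totally graded-symmetric. -/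
theorem gamma_symmetry
    {ι : Type} [Fintype ι] [DecidableEq ι] {A : Type} [Ring A] [Algebra ℚ A]
    (S : SuperAlg ι A) (E Einv : ι → ι → A) (Gu : ι → ι → ι → A)
    (hE : S.AntiSymp E Einv) (hcl : S.ClosedId Einv)
    (hGu_mem : ∀ a b c, Gu a b c ∈ S.hom (S.ε a + S.ε b + S.ε c)) :
    ((∀ a b c,
        S.D a (Einv b c)
          = sgn (S.ε a * S.ε b) • S.Glow Einv Gu b a c
            - sgn (S.ε b * S.ε c) • (sgn (S.ε a * S.ε c) • S.Glow Einv Gu c a b))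
      ↔ (∀ a b c,
        S.gam Einv Gu a b c
          = sgn (S.ε a * S.ε b + S.ε b * S.ε c + S.ε c * S.ε a) •
              S.gam Einv Gu c b a))
    ∧ ((∀ a b c,
        S.D a (Einv b c)
          = sgn (S.ε a * S.ε b) • S.Glow Einv Gu b a c
            - sgn (S.ε b * S.ε c) • (sgn (S.ε a * S.ε c) • S.Glow Einv Gu c a b)) →
       (∀ a b c, S.Glow Einv Gu a b c = sgn (S.ε b * S.ε c) • S.Glow Einv Gu a c b) →
       ∀ a b c,
         sgn (S.ε a * S.ε b) • S.gam Einv Gu b a c = S.gam Einv Gu a b c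
         ∧ S.gam Einv Gu a b c = sgn (S.ε b * S.ε c) • S.gam Einv Gu a c b) := by
  have key : (∀ a b c,
        S.D a (Einv b c)
          = sgn (S.ε a * S.ε b) • S.Glow Einv Gu b a c
            - sgn (S.ε b * S.ε c) • (sgn (S.ε a * S.ε c) • S.Glow Einv Gu c a b))
      ↔ (∀ a b c,
        S.gam Einv Gu a b c
          = sgn (S.ε a * S.ε b + S.ε b * S.ε c + S.ε c * S.ε a) •
              S.gam Einv Gu c b a) := by
    rw [forall_comm (p := fun a b => ∀ c, S.gam Einv Gu a b c = _)]
    refine forall_congr' fun a => forall_congr' fun b => forall_congr' fun c => ?_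
    rw [gam_reflect_iff, gam_sub_gam S Gu hE hcl, sub_eq_zero, eq_comm]
  refine ⟨key, fun hA ht a b c => ⟨?_, gam_swap S ht a b c⟩⟩
  -- The transposition `(A B)` is `(B C)` conjugated by the reflection `(A C)`.
  rw [key.1 hA b a c, gam_swap S ht c a b, key.1 hA c b a]
  simp only [sgn_add, mul_comm (S.ε b) (S.ε a), mul_comm (S.ε c) (S.ε b)]
  rcases sgn_eq (S.ε a * S.ε b) with h | h <;>
  rcases sgn_eq (S.ε b * S.ε c) with h' | h' <;>
  rcases sgn_eq (S.ε a * S.ε c) with h'' | h'' <;>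
  simp [h, h', h'']

end SuperAlg
end
end
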